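/- Over the ordered alphabet {a<b}, each of the words a^α, b^α, a^α b^β, b^α a^β, a^α b a^β, b^α a b^β, a^α b a b^β, and b^α a b a^β (for α, β ≥ 1), as well as the empty word, is M-unambiguous: no distinct word is M-equivalent to it. -/

import Mathlib

open List

/-- Number of occurrences of `v` as a scattered subsequence of `w`. -/
def scount {α : Type*} [DecidableEq α] (w v : List α) : ℕ := w.sublists.count v

/-- The binary ordered alphabet {a < b}. -/
inductive AB | a | b
deriving DecidableEq

open AB

/-- M-equivalence over the ordered alphabet {a < b}. -/
def MEq2 (w w' : List AB) : Prop :=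
  scount w [a] = scount w' [a] ∧ scount w [b] = scount w' [b] ∧
  scount w [a, b] = scount w' [a, b]

/-- A word over {a < b} is M-unambiguous if the only word M-equivalent to it is itself. -/
def Munamb2 (w : List AB) : Prop := ∀ w' : List AB, MEq2 w' w → w' = w

/-- recursive count of `ab` -/
def pab : List AB → ℕ
  | [] => 0
  | a :: w => w.count b + pab w
  | b :: w => pab w

theorem scount_cons_cons (x y : AB) (w v : List AB) :
    scount (x :: w) (y :: v) = scount w (y :: v) + if x = y then scount w v else 0 := by
  unfold scount
  rw [(List.sublists_perm_sublists' (x :: w)).count_eq, (List.sublists_perm_sublists' w).count_eq,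
    (List.sublists_perm_sublists' w).count_eq, List.sublists'_cons, List.count_append]
  congr 1
  split_ifs with h
  · subst h
    exact List.count_map_of_injective _ _ List.cons_injective _
  · rw [List.count_eq_zero]
    simp [h]

theorem scount_nil_right (w : List AB) : scount w [] = 1 := by
  induction w with
  | nil => rfl
  | cons x w ih =>
    unfold scount at *
    rw [(List.sublists_perm_sublists' _).count_eq] at *
    rw [List.sublists'_cons, List.count_append, ih]
    simp [List.count_eq_zero]

theorem scount_single (w : List AB) (x : AB) : scount w [x] = w.count x := by
  induction w with
  | nil => cases x <;> rfl
  | cons y w ih =>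
    rw [scount_cons_cons, ih, scount_nil_right, List.count_cons]
    simp

theorem scount_ab (w : List AB) : scount w [a, b] = pab w := by
  induction w with
  | nil => rfl
  | cons y w ih =>
    rw [scount_cons_cons, ih, scount_single]
    cases y <;> simp [pab, add_comm]

theorem pab_append (u v : List AB) : pab (u ++ v) = pab u + pab v + u.count a * v.count b := by
  induction u with
  | nil => simp [pab]
  | cons x u ih => cases x <;> simp [pab, ih] <;> ring

theorem pab_rep_a (n : ℕ) : pab (replicate n a) = 0 := by
  induction n with
  | zero => rfl
  | succ n ih => simp [replicate_succ, pab, ih, List.count_replicate]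

theorem pab_rep_b (n : ℕ) : pab (replicate n b) = 0 := by
  induction n with
  | zero => rfl
  | succ n ih => simp [replicate_succ, pab, ih]

theorem pab_le (w : List AB) : pab w ≤ w.count a * w.count b := by
  induction w with
  | nil => simp [pab]
  | cons x w ih => cases x <;> simp [pab] <;> nlinarith

theorem no_b (w : List AB) (h : w.count b = 0) : w = replicate (w.count a) a := by
  induction w with
  | nil => rfl
  | cons x w ih =>
    cases x
    · simp at h
      simp [replicate_succ]
      exact ih (by simpa using h)
    · simp at h

theorem no_a (w : List AB) (h : w.count a = 0) : w = replicate (w.count b) b := by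
  induction w with
  | nil => rfl
  | cons x w ih =>
    cases x
    · simp at h
    · simp at h
      simp [replicate_succ]
      exact ih (by simpa using h)

theorem form_zero (w : List AB) (h : pab w = 0) : ∃ m n, w = replicate m b ++ replicate n a := by
  induction w with
  | nil => exact ⟨0, 0, rfl⟩
  | cons x w ih =>
    cases x
    · simp only [pab] at h
      exact ⟨0, w.count a + 1, by
        simp only [replicate_succ]; simpa using no_b w (by omega)⟩
    · obtain ⟨m, n, e⟩ := ih h
      exact ⟨m + 1, n, by rw [e]; simp [replicate_succ]⟩

theorem form_max (w : List AB) (h : pab w = w.count a * w.count b) :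
    ∃ m n, w = replicate m a ++ replicate n b := by
  induction w with
  | nil => exact ⟨0, 0, rfl⟩
  | cons x w ih =>
    cases x
    · simp [pab] at h
      obtain ⟨m, n, e⟩ := ih (by nlinarith)
      exact ⟨m + 1, n, by rw [e]; simp [replicate_succ]⟩
    · simp [pab] at h
      have := pab_le w
      exact ⟨0, w.count b + 1, by
        simp only [replicate_succ]; simpa using no_a w (by nlinarith)⟩

theorem form_a (w : List AB) (h : w.count a = 1) :
    ∃ m n, w = replicate m b ++ [a] ++ replicate n b := by
  induction w with
  | nil => simp at h
  | cons x w ih =>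
    cases x
    · rw [List.count_cons_self] at h
      exact ⟨0, w.count b, by simpa using no_a w (by omega)⟩
    · obtain ⟨m, n, e⟩ := ih (by simpa using h)
      exact ⟨m + 1, n, by rw [e]; simp [replicate_succ]⟩

theorem form_b (w : List AB) (h : w.count b = 1) :
    ∃ m n, w = replicate m a ++ [b] ++ replicate n a := by
  induction w with
  | nil => simp at h
  | cons x w ih =>
    cases x
    · obtain ⟨m, n, e⟩ := ih (by simpa using h)
      exact ⟨m + 1, n, by rw [e]; simp [replicate_succ]⟩
    · rw [List.count_cons_self] at h
      exact ⟨0, w.count a, by simpa using no_b w (by omega)⟩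

theorem form_one (w : List AB) (h : pab w = 1) :
    ∃ m n, w = replicate m b ++ [a, b] ++ replicate n a := by
  induction w with
  | nil => simp [pab] at h
  | cons x w ih =>
    cases x
    · simp only [pab] at h
      have hl := pab_le w
      have hb : w.count b = 1 := by
        rcases Nat.eq_zero_or_pos (w.count b) with h0 | h0
        · rw [h0] at hl h; omega
        · omega
      obtain ⟨m, n, e⟩ := form_zero w (by omega)
      have hm : m = 1 := by rw [e] at hb; simpa [List.count_replicate] using hb
      exact ⟨0, n, by rw [e, hm]; simp⟩
    · obtain ⟨m, n, e⟩ := ih h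
      exact ⟨m + 1, n, by rw [e]; simp [replicate_succ]⟩

theorem form_max_one (w : List AB) (h : pab w + 1 = w.count a * w.count b) :
    ∃ m n, w = replicate m a ++ [b, a] ++ replicate n b := by
  induction w with
  | nil => simp [pab] at h
  | cons x w ih =>
    cases x
    · simp [pab] at h
      obtain ⟨m, n, e⟩ := ih (by nlinarith)
      exact ⟨m + 1, n, by rw [e]; simp [replicate_succ]⟩
    · simp [pab] at h
      have hl := pab_le w
      have ha : w.count a = 1 := by
        rcases Nat.eq_zero_or_pos (w.count a) with h0 | h0
        · rw [h0] at h; omega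
        · nlinarith
      obtain ⟨m, n, e⟩ := form_max w (by rw [ha] at h ⊢; omega)
      have hm : m = 1 := by rw [e] at ha; simpa [List.count_replicate] using ha
      exact ⟨0, n, by rw [e, hm]; simp⟩

theorem munamb_iff (w : List AB) : Munamb2 w ↔ ∀ w' : List AB,
    w'.count a = w.count a → w'.count b = w.count b → pab w' = pab w → w' = w := by
  simp only [Munamb2, MEq2, scount_single, scount_ab, and_imp]

theorem stmt_4 (α β : ℕ) (hα : 1 ≤ α) (hβ : 1 ≤ β) :
    Munamb2 [] ∧
    Munamb2 (replicate α a) ∧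
    Munamb2 (replicate α b) ∧
    Munamb2 (replicate α a ++ replicate β b) ∧
    Munamb2 (replicate α b ++ replicate β a) ∧
    Munamb2 (replicate α a ++ [b] ++ replicate β a) ∧
    Munamb2 (replicate α b ++ [a] ++ replicate β b) ∧
    Munamb2 (replicate α a ++ [b, a] ++ replicate β b) ∧
    Munamb2 (replicate α b ++ [a, b] ++ replicate β a) := by
  simp only [munamb_iff]
  refine ⟨?_, ?_, ?_, ?_, ?_, ?_, ?_, ?_, ?_⟩
  · intro w ha hb hp
    simp [pab_append, pab_rep_a, pab_rep_b, List.count_replicate, pab] at ha hb hp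
    obtain ⟨m, n, rfl⟩ := form_zero w hp
    simp [pab_append, pab_rep_a, pab_rep_b, List.count_replicate, pab] at ha hb hp
    obtain rfl : m = _ := by first | exact ha | exact hb | exact hp | omega
    obtain rfl : n = _ := by first | exact ha | exact hb | exact hp | omega
    simp
  · intro w ha hb hp
    simp [pab_append, pab_rep_a, pab_rep_b, List.count_replicate, pab] at ha hb hp
    obtain ⟨m, n, rfl⟩ := form_zero w hp
    simp [pab_append, pab_rep_a, pab_rep_b, List.count_replicate, pab] at ha hb hp
    obtain rfl : m = _ := by first | exact ha | exact hb | exact hp | omega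
    obtain rfl : n = _ := by first | exact ha | exact hb | exact hp | omega
    simp
  · intro w ha hb hp
    simp [pab_append, pab_rep_a, pab_rep_b, List.count_replicate, pab] at ha hb hp
    obtain ⟨m, n, rfl⟩ := form_zero w hp
    simp [pab_append, pab_rep_a, pab_rep_b, List.count_replicate, pab] at ha hb hp
    obtain rfl : m = _ := by first | exact ha | exact hb | exact hp | omega
    obtain rfl : n = _ := by first | exact ha | exact hb | exact hp | omega
    simp
  · intro w ha hb hp
    simp [pab_append, pab_rep_a, pab_rep_b, List.count_replicate, pab] at ha hb hp
    obtain ⟨m, n, rfl⟩ := form_max w (by rw [hp, ha, hb])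
    simp [pab_append, pab_rep_a, pab_rep_b, List.count_replicate, pab] at ha hb hp
    obtain rfl : m = _ := by first | exact ha | exact hb | exact hp | omega
    obtain rfl : n = _ := by first | exact ha | exact hb | exact hp | omega
    simp
  · intro w ha hb hp
    simp [pab_append, pab_rep_a, pab_rep_b, List.count_replicate, pab] at ha hb hp
    obtain ⟨m, n, rfl⟩ := form_zero w hp
    simp [pab_append, pab_rep_a, pab_rep_b, List.count_replicate, pab] at ha hb hp
    obtain rfl : m = _ := by first | exact ha | exact hb | exact hp | omega
    obtain rfl : n = _ := by first | exact ha | exact hb | exact hp | omega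
    simp
  · intro w ha hb hp
    simp [pab_append, pab_rep_a, pab_rep_b, List.count_replicate, pab] at ha hb hp
    obtain ⟨m, n, rfl⟩ := form_b w hb
    simp [pab_append, pab_rep_a, pab_rep_b, List.count_replicate, pab] at ha hb hp
    obtain rfl : m = α := by omega
    obtain rfl : n = β := by omega
    rfl
  · intro w ha hb hp
    simp [pab_append, pab_rep_a, pab_rep_b, List.count_replicate, pab] at ha hb hp
    obtain ⟨m, n, rfl⟩ := form_a w ha
    simp [pab_append, pab_rep_a, pab_rep_b, List.count_replicate, pab] at ha hb hp
    obtain rfl : m = α := by omega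
    obtain rfl : n = β := by omega
    rfl
  · intro w ha hb hp
    simp [pab_append, pab_rep_a, pab_rep_b, List.count_replicate, pab] at ha hb hp
    obtain ⟨m, n, rfl⟩ := form_max_one w (by rw [hp, ha, hb]; ring)
    simp [pab_append, pab_rep_a, pab_rep_b, List.count_replicate, pab] at ha hb hp
    obtain rfl : m = _ := by first | exact ha | exact hb | exact hp | omega
    obtain rfl : n = _ := by first | exact ha | exact hb | exact hp | omega
    simp
  · intro w ha hb hp
    simp [pab_append, pab_rep_a, pab_rep_b, List.count_replicate, pab] at ha hb hp
    obtain ⟨m, n, rfl⟩ := form_one w hp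
    simp [pab_append, pab_rep_a, pab_rep_b, List.count_replicate, pab] at ha hb hp
    obtain rfl : m = _ := by first | exact ha | exact hb | exact hp | omega
    obtain rfl : n = _ := by first | exact ha | exact hb | exact hp | omega
    simp
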